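/- Let V be a finite set with distinct s, t ∈ V, and let c_λ : V × V → ℝ, λ ∈ ℝ, be parametric nonnegative capacities such that λ ↦ c_λ(s, v) is nondecreasing for every v, λ ↦ c_λ(v, t) is nonincreasing for every v, and c_λ(u, v) is constant in λ whenever u ≠ s and v ≠ t. Let λ₁ ≤ λ₂, let S_{λ₁} be a minimum s,t-cut with respect to capacities c_{λ₁}, and let S_{λ₂} be a minimum s,t-cut with respect to capacities c_{λ₂}. Then S_{λ₁} ∩ S_{λ₂} is a minimum s,t-cut with respect to capacities c_{λ₁}. -/

import Mathlib

/-- The cut value of a set `S` for capacities `c`: `c⁺(S) = Σ_{u ∈ S, v ∉ S} c u v`. -/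
def cutVal {V : Type*} [Fintype V] [DecidableEq V] (c : V → V → ℝ) (S : Finset V) : ℝ :=
  ∑ u ∈ S, ∑ v ∈ Sᶜ, c u v

/-- `S` is a minimum `s,t`-cut for capacities `c`. -/
def IsMinCut {V : Type*} [Fintype V] [DecidableEq V] (s t : V) (c : V → V → ℝ)
    (S : Finset V) : Prop :=
  s ∈ S ∧ t ∉ S ∧ ∀ S' : Finset V, s ∈ S' → t ∉ S' → cutVal c S ≤ cutVal c S'

/-!
Submodularity of cut functions extends to two capacities, in the form
`c⁺(A ∩ B) + d⁺(A ∪ B) ≤ c⁺(A) + d⁺(B)`, provided that the edges which the two sides charge to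
different capacities are ordered the right way and that the edges between `A \ B` and `B \ A`,
which only the right-hand side counts, have nonnegative capacity. Let `A` and `B` be minimum
`s,t`-cuts for `c = c_{λ₁}` and `d = c_{λ₂}`. An edge with its head in `A` does not enter `t`,
so its capacity does not decrease from `c` to `d`; an edge with its tail outside `B` does not
leave `s`, so its capacity does not increase. Since `A ∪ B` is again an `s,t`-cut, minimality of
`B` for `d` leaves `c⁺(A ∩ B) ≤ c⁺(A)`.
-/

section Cut

variable {V : Type*} [Fintype V] [DecidableEq V] {s t : V} {c d : V → V → ℝ} {A B : Finset V}

theorem cutVal_eq_sum_ite (c : V → V → ℝ) (S : Finset V) :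
    cutVal c S = ∑ u, ∑ v, if u ∈ S ∧ v ∉ S then c u v else 0 := by
  simp only [cutVal, ite_and, ← Finset.mem_compl, Finset.sum_ite_irrel, Finset.sum_ite_mem,
    Finset.univ_inter, Finset.sum_const_zero]

theorem cutVal_inter_add_cutVal_union_le
    (hc : ∀ u ∈ A \ B, ∀ v ∈ B \ A, 0 ≤ c u v)
    (hd : ∀ u ∈ B \ A, ∀ v ∈ A \ B, 0 ≤ d u v)
    (hcd : ∀ u ∈ A ∩ B, ∀ v ∈ A \ B, c u v ≤ d u v)
    (hdc : ∀ u ∈ A \ B, ∀ v ∈ (A ∪ B)ᶜ, d u v ≤ c u v) :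
    cutVal c (A ∩ B) + cutVal d (A ∪ B) ≤ cutVal c A + cutVal d B := by
  simp only [cutVal_eq_sum_ite, ← Finset.sum_add_distrib]
  refine Finset.sum_le_sum fun u _ => Finset.sum_le_sum fun v _ => ?_
  -- The four hypotheses cover exactly the edges whose contributions to the two sides differ.
  grind [Finset.mem_compl]

theorem IsMinCut.inter_of_cutVal_add_le (hA : IsMinCut s t c A) (hB : IsMinCut s t d B)
    (h : cutVal c (A ∩ B) + cutVal d (A ∪ B) ≤ cutVal c A + cutVal d B) :
    IsMinCut s t c (A ∩ B) := by
  obtain ⟨hsA, htA, hminA⟩ := hA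
  obtain ⟨hsB, htB, hminB⟩ := hB
  have hunion : cutVal d B ≤ cutVal d (A ∪ B) :=
    hminB _ (Finset.mem_union_left B hsA) (by simp [htA, htB])
  have hinter : cutVal c (A ∩ B) ≤ cutVal c A := by linarith
  exact ⟨Finset.mem_inter.2 ⟨hsA, hsB⟩, fun ht => htA (Finset.mem_of_mem_inter_left ht),
    fun S hs ht => hinter.trans (hminA S hs ht)⟩

theorem stmt12_general
    (hnonneg : ∀ u v, u ≠ s → v ≠ t → 0 ≤ c u v)
    (hsource : ∀ v, c s v ≤ d s v) (hsink : ∀ u, d u t ≤ c u t)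
    (hinner : ∀ u v, u ≠ s → v ≠ t → c u v = d u v)
    (hA : IsMinCut s t c A) (hB : IsMinCut s t d B) :
    IsMinCut s t c (A ∩ B) := by
  have source_ne {S : Finset V} (hs : s ∈ S) {u : V} (hu : u ∉ S) : u ≠ s :=
    (ne_of_mem_of_not_mem hs hu).symm
  have sink_ne {S : Finset V} (ht : t ∉ S) {v : V} (hv : v ∈ S) : v ≠ t :=
    ne_of_mem_of_not_mem hv ht
  have hcd {u v : V} (hv : v ≠ t) : c u v ≤ d u v := by
    obtain rfl | hu := eq_or_ne u s
    exacts [hsource v, (hinner u v hu hv).le]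
  have hdc {u v : V} (hu : u ≠ s) : d u v ≤ c u v := by
    obtain rfl | hv := eq_or_ne v t
    exacts [hsink u, (hinner u v hu hv).ge]
  refine hA.inter_of_cutVal_add_le hB (cutVal_inter_add_cutVal_union_le ?_ ?_ ?_ ?_)
  · intro u hu v hv
    rw [Finset.mem_sdiff] at hu hv
    exact hnonneg u v (source_ne hB.1 hu.2) (sink_ne hB.2.1 hv.1)
  · intro u hu v hv
    rw [Finset.mem_sdiff] at hu hv
    have hvt : v ≠ t := sink_ne hA.2.1 hv.1
    exact (hnonneg u v (source_ne hA.1 hu.2) hvt).trans (hcd hvt)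
  · intro u _ v hv
    exact hcd (sink_ne hA.2.1 (Finset.mem_sdiff.1 hv).1)
  · intro u hu v _
    exact hdc (source_ne hB.1 (Finset.mem_sdiff.1 hu).2)

end Cut

/-- For parametric nonnegative capacities (nondecreasing on edges out of `s`,
nonincreasing on edges into `t`, constant otherwise), if `λ₁ ≤ λ₂`, `S_{λ₁}` is a
minimum `s,t`-cut for `c_{λ₁}` and `S_{λ₂}` one for `c_{λ₂}`, then `S_{λ₁} ∩ S_{λ₂}`
is a minimum `s,t`-cut for `c_{λ₁}`. -/
theorem stmt12 {V : Type*} [DecidableEq V] [Fintype V]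
    (s t : V) (hst : s ≠ t)
    (c : ℝ → V → V → ℝ)
    (hnn : ∀ (lam : ℝ) (u v : V), 0 ≤ c lam u v)
    (hmono : ∀ v : V, Monotone fun lam => c lam s v)
    (hanti : ∀ v : V, Antitone fun lam => c lam v t)
    (hconst : ∀ u v : V, u ≠ s → v ≠ t → ∀ lam lam' : ℝ, c lam u v = c lam' u v)
    (lam1 lam2 : ℝ) (h12 : lam1 ≤ lam2)
    (S1 S2 : Finset V)
    (h1 : IsMinCut s t (c lam1) S1) (h2 : IsMinCut s t (c lam2) S2) :
    IsMinCut s t (c lam1) (S1 ∩ S2) :=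
  stmt12_general (fun u v _ _ => hnn lam1 u v) (fun v => hmono v h12) (fun u => hanti u h12)
    (fun u v hu hv => hconst u v hu hv lam1 lam2) h1 h2
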